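/- Let L be a finite lattice with bottom element ⊥ and top element ⊤. A subset X ⊆ L is c-independent if and only if there exists a maximal chain ⊥ = p_k ⋖ p_{k−1} ⋖ ⋯ ⋖ p_1 ⋖ p_0 = ⊤ in L such that X is a partial cross section of the partition of L ∖ {⊥} associated to this chain. -/

import Mathlib

/-- A list `ℓ 0, …, ℓ (k-1)` of elements of a poset is c-independent with witness
`m 0, …, m (k-1)`: `ℓ j ≰ m j` for all `j`, and `ℓ i ≤ m j` whenever `i < j`. -/
def CIndepList {P : Type*} [PartialOrder P] {k : ℕ} (ℓ m : Fin k → P) : Prop :=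
  (∀ j, ¬ ℓ j ≤ m j) ∧ ∀ i j : Fin k, i < j → ℓ i ≤ m j

/-- A subset is c-independent if it can be enumerated without repetition as a
c-independent list admitting some witness. -/
def CIndepSet {P : Type*} [PartialOrder P] (X : Set P) : Prop :=
  ∃ (k : ℕ) (ℓ m : Fin k → P), Function.Injective ℓ ∧ Set.range ℓ = X ∧ CIndepList ℓ m

/-! For a descending sequence `p`, an element of the `i`-th block lies below `p j` exactly for
`j ≤ i`. Hence an element's block in a refinement of a chain determines its block in the chain
itself, and partial cross sections persist under refinement. If `ℓ` is c-independent with witness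
`m`, then it also has the witness `j ↦ ⨅ i ≥ j, m i`, which is strictly increasing in `j` because
`ℓ j` separates consecutive terms; so `ℓ` is a cross section of that chain, and therefore of every
maximal chain refining it. Conversely, a cross section, listed by decreasing index, is
c-independent, the bottom ends of the blocks serving as witness. -/

/-- The block `{x | x ≤ p i ∧ x ≰ p (i + 1)}` of the partition associated to a descending sequence
`p 0, …, p k`. It is indexed from `0`, so it is the `Q_{i+1}` of the usual numbering. -/
def chainBlock {P : Type*} [LE P] {k : ℕ} (p : Fin (k + 1) → P) (i : Fin k) : Set P :=
  {x | x ≤ p i.castSucc ∧ ¬ x ≤ p i.succ}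

/-- `X` is a partial cross section of the blocks of `p`: each element of `X` lies in some block,
and each block contains at most one element of `X`. The sequence `p` is arbitrary here, so that
the notion also applies to chains that are not maximal. -/
def IsPartialCrossSection {P : Type*} [LE P] {k : ℕ} (p : Fin (k + 1) → P) (X : Set P) : Prop :=
  (∀ x ∈ X, ∃ i, x ∈ chainBlock p i) ∧
    ∀ x ∈ X, ∀ y ∈ X, ∀ i, x ∈ chainBlock p i → y ∈ chainBlock p i → x = y

section Blocks

theorem exists_mem_chainBlock {P : Type*} [LE P] {k : ℕ} {p : Fin (k + 1) → P} {x : P}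
    (h_zero : x ≤ p 0) (h_last : ¬ x ≤ p (Fin.last k)) : ∃ i, x ∈ chainBlock p i := by
  by_contra! h
  have h_le (i : Fin (k + 1)) : x ≤ p i := by
    induction i using Fin.induction with
    | zero => exact h_zero
    | succ i ih => exact not_not.1 fun hi => h i ⟨ih, hi⟩
  exact h_last (h_le _)

variable {P : Type*} [Preorder P] {k n : ℕ} {p : Fin (k + 1) → P} {q : Fin (n + 1) → P}
  {X : Set P} {x y : P}

theorem le_apply_iff_of_mem_chainBlock (hp : Antitone p) {i : Fin k} (hx : x ∈ chainBlock p i)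
    {j : Fin (k + 1)} : x ≤ p j ↔ j ≤ i.castSucc := by
  refine ⟨fun hxj => ?_, fun hji => hx.1.trans (hp hji)⟩
  by_contra! hij
  exact hx.2 (hxj.trans (hp (Fin.castSucc_lt_iff_succ_le.1 hij)))

theorem le_apply_succ_iff_of_mem_chainBlock (hp : Antitone p) {i j : Fin k}
    (hx : x ∈ chainBlock p j) : x ≤ p i.succ ↔ i < j := by
  rw [le_apply_iff_of_mem_chainBlock hp hx, Fin.succ_le_castSucc_iff]

theorem eq_of_mem_chainBlock (hp : Antitone p) {i j : Fin k} (hi : x ∈ chainBlock p i)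
    (hj : x ∈ chainBlock p j) : i = j :=
  le_antisymm (not_lt.1 fun h => hj.2 ((le_apply_succ_iff_of_mem_chainBlock hp hi).2 h))
    (not_lt.1 fun h => hi.2 ((le_apply_succ_iff_of_mem_chainBlock hp hj).2 h))

theorem mem_chainBlock_of_range_subset (hp : Antitone p) (hqp : Set.range q ⊆ Set.range p)
    {i : Fin k} (hx : x ∈ chainBlock p i) (hy : y ∈ chainBlock p i) {j : Fin n}
    (hxj : x ∈ chainBlock q j) : y ∈ chainBlock q j := by
  have h_iff (s : Fin (n + 1)) : x ≤ q s ↔ y ≤ q s := by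
    obtain ⟨t, ht⟩ := hqp ⟨s, rfl⟩
    rw [← ht, le_apply_iff_of_mem_chainBlock hp hx, le_apply_iff_of_mem_chainBlock hp hy]
  exact ⟨(h_iff _).1 hxj.1, fun h => hxj.2 ((h_iff _).2 h)⟩

theorem IsPartialCrossSection.of_range_subset (hX : IsPartialCrossSection q X) (hp : Antitone p)
    (hqp : Set.range q ⊆ Set.range p) : IsPartialCrossSection p X := by
  constructor
  · intro x hx
    obtain ⟨j, h_le, h_not_le⟩ := hX.1 x hx
    obtain ⟨s, hs⟩ := hqp ⟨j.castSucc, rfl⟩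
    obtain ⟨t, ht⟩ := hqp ⟨j.succ, rfl⟩
    rw [← hs] at h_le
    rw [← ht] at h_not_le
    exact exists_mem_chainBlock (h_le.trans (hp (Fin.zero_le s)))
      fun h => h_not_le (h.trans (hp (Fin.le_last t)))
  · intro x hx y hy i hxi hyi
    obtain ⟨j, hxj⟩ := hX.1 x hx
    exact hX.2 x hx y hy j hxj (mem_chainBlock_of_range_subset hp hqp hxi hyi hxj)

end Blocks

section OfPartialCrossSection

variable {P : Type*} [PartialOrder P] {k : ℕ}

theorem CIndepList.injective {ℓ m : Fin k → P} (h : CIndepList ℓ m) : Function.Injective ℓ :=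
  .of_lt_imp_ne fun i j hij h_eq => h.1 j (h_eq ▸ h.2 i j hij)

theorem cIndepSet_range {ι : Type*} [LinearOrder ι] [Finite ι] {ℓ m : ι → P}
    (h_not_le : ∀ j, ¬ ℓ j ≤ m j) (h_le : ∀ i j, i < j → ℓ i ≤ m j) :
    CIndepSet (Set.range ℓ) := by
  have := Fintype.ofFinite ι
  let e : Fin (Fintype.card ι) ≃o ι := Fintype.orderIsoFinOfCardEq ι rfl
  have h : CIndepList (ℓ ∘ e) (m ∘ e) :=
    ⟨fun j => h_not_le (e j), fun i j hij => h_le _ _ (e.strictMono hij)⟩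
  exact ⟨_, _, _, h.injective, e.surjective.range_comp ℓ, h⟩

theorem IsPartialCrossSection.cIndepSet {p : Fin (k + 1) → P} {X : Set P}
    (hX : IsPartialCrossSection p X) (hp : Antitone p) : CIndepSet X := by
  let S : Set (Fin k) := {i | ∃ x ∈ X, x ∈ chainBlock p i}
  choose g hgX hg using fun i : S => i.2
  have h_range : Set.range (g ∘ OrderDual.ofDual) = X := by
    refine Set.Subset.antisymm (Set.range_subset_iff.2 fun i => hgX _) fun x hx => ?_
    obtain ⟨i, hi⟩ := hX.1 x hx
    exact ⟨OrderDual.toDual ⟨i, x, hx, hi⟩, hX.2 _ (hgX _) x hx i (hg _) hi⟩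
  rw [← h_range]
  exact cIndepSet_range (m := fun i : Sᵒᵈ => p (OrderDual.ofDual i).1.succ) (fun i => (hg _).2)
    fun i j hij => (le_apply_succ_iff_of_mem_chainBlock hp (hg _)).2 hij

end OfPartialCrossSection

section TailInf

variable {P : Type*} [SemilatticeInf P] [OrderTop P] {n : ℕ} {ℓ m : Fin n → P}

/-- The infimum `⨅ i ≥ j, m i`, used to replace a witness of c-independence by an increasing one.
The index `j = n` is allowed and gives the empty infimum `⊤`. -/
def tailInf (m : Fin n → P) (j : Fin (n + 1)) : P :=
  ({i | j ≤ i.castSucc} : Finset (Fin n)).inf m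

theorem tailInf_mono (m : Fin n → P) : Monotone (tailInf m) :=
  fun _ _ hij => Finset.inf_mono (Finset.monotone_filter_right _ fun _ _ => hij.trans)

theorem tailInf_castSucc_le (m : Fin n → P) (j : Fin n) : tailInf m j.castSucc ≤ m j :=
  Finset.inf_le (by simp)

theorem CIndepList.not_le_tailInf_castSucc (h : CIndepList ℓ m) (j : Fin n) :
    ¬ ℓ j ≤ tailInf m j.castSucc :=
  fun h_le => h.1 j (h_le.trans (tailInf_castSucc_le m j))

theorem CIndepList.le_tailInf_succ (h : CIndepList ℓ m) (j : Fin n) : ℓ j ≤ tailInf m j.succ :=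
  Finset.le_inf fun i hi => h.2 j i (by simpa using hi)

theorem CIndepList.strictMono_tailInf (h : CIndepList ℓ m) : StrictMono (tailInf m) :=
  Fin.strictMono_iff_lt_succ.2 fun j =>
    lt_of_le_not_ge (tailInf_mono m Fin.castSucc_lt_succ.le)
      fun h_le => h.not_le_tailInf_castSucc j ((h.le_tailInf_succ j).trans h_le)

theorem CIndepList.mem_chainBlock_tailInf (h : CIndepList ℓ m) (j : Fin n) :
    ℓ j ∈ chainBlock (tailInf m ∘ Fin.rev) j.rev := by
  simpa [chainBlock, Fin.rev_castSucc, Fin.rev_succ] using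
    And.intro (h.le_tailInf_succ j) (h.not_le_tailInf_castSucc j)

theorem CIndepSet.exists_strictAnti_isPartialCrossSection {X : Set P} (hX : CIndepSet X) :
    ∃ (n : ℕ) (q : Fin (n + 1) → P), StrictAnti q ∧ IsPartialCrossSection q X := by
  obtain ⟨n, ℓ, m, -, rfl, h⟩ := hX
  have hq : StrictAnti (tailInf m ∘ Fin.rev) :=
    h.strictMono_tailInf.comp_strictAnti Fin.rev_strictAnti
  refine ⟨n, _, hq, ?_, ?_⟩
  · rintro _ ⟨a, rfl⟩
    exact ⟨a.rev, h.mem_chainBlock_tailInf a⟩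
  · rintro _ ⟨a, rfl⟩ _ ⟨b, rfl⟩ i ha hb
    have ha_rev : a.rev = i := eq_of_mem_chainBlock hq.antitone (h.mem_chainBlock_tailInf a) ha
    have hb_rev : b.rev = i := eq_of_mem_chainBlock hq.antitone (h.mem_chainBlock_tailInf b) hb
    rw [Fin.rev_injective (ha_rev.trans hb_rev.symm)]

end TailInf

theorem exists_covBy_refinement_of_strictAnti {P : Type*} [PartialOrder P] [BoundedOrder P]
    [WellFoundedLT P] [WellFoundedGT P] {n : ℕ} {q : Fin (n + 1) → P} (hq : StrictAnti q) :
    ∃ (k : ℕ) (p : Fin (k + 1) → P), p 0 = ⊤ ∧ p (Fin.last k) = ⊥ ∧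
      (∀ i : Fin k, p i.succ ⋖ p i.castSucc) ∧ Set.range q ⊆ Set.range p := by
  obtain ⟨t, f, htf, h_head, h_last⟩ :=
    (LTSeries.mk n (q ∘ Fin.rev)
      (hq.comp Fin.rev_strictAnti)).exists_relSeries_covBy_and_head_eq_bot_and_last_eq_bot
  refine ⟨t.length, t.reverse, ?_, ?_, t.reverse.step, ?_⟩
  · exact t.head_reverse.trans h_last
  · exact t.last_reverse.trans h_head
  · rintro _ ⟨j, rfl⟩
    exact ⟨(f j.rev).rev, by simpa using! congr_fun htf j.rev⟩

theorem cIndepSet_iff_partial_cross_section_general {L : Type*} [SemilatticeInf L]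
    [BoundedOrder L] [WellFoundedLT L] [WellFoundedGT L] (X : Set L) :
    CIndepSet X ↔
      ∃ (k : ℕ) (p : Fin (k + 1) → L), p 0 = ⊤ ∧ p (Fin.last k) = ⊥ ∧
        (∀ i : Fin k, p i.succ ⋖ p i.castSucc) ∧ IsPartialCrossSection p X := by
  have antitone_of_covBy {k : ℕ} {p : Fin (k + 1) → L}
      (h_covBy : ∀ i : Fin k, p i.succ ⋖ p i.castSucc) : Antitone p :=
    Fin.antitone_iff_succ_le.2 fun i => (h_covBy i).le
  constructor
  · intro hX
    obtain ⟨n, q, hq, hXq⟩ := hX.exists_strictAnti_isPartialCrossSection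
    obtain ⟨k, p, h_top, h_bot, h_covBy, hqp⟩ := exists_covBy_refinement_of_strictAnti hq
    exact ⟨k, p, h_top, h_bot, h_covBy, hXq.of_range_subset (antitone_of_covBy h_covBy) hqp⟩
  · rintro ⟨k, p, -, -, h_covBy, hXp⟩
    exact hXp.cIndepSet (antitone_of_covBy h_covBy)

/-- A subset `X` of a finite lattice `L` is c-independent iff there is a maximal chain
`⊤ = p 0 ⋗ p 1 ⋗ ⋯ ⋗ p k = ⊥` (each step a covering) such that `X` is a partial cross
section of the associated partition of `L \ {⊥}`, whose blocks are
`Q i = {x | x ≤ p i ∧ x ≰ p (i+1)}` for `i = 0, …, k-1`: every element of `X` lies in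
some block, and no two distinct elements of `X` lie in the same block. -/
theorem cIndepSet_iff_partial_cross_section {L : Type*} [Lattice L] [Fintype L]
    [BoundedOrder L] (X : Set L) :
    CIndepSet X ↔
      ∃ (k : ℕ) (p : Fin (k + 1) → L), p 0 = ⊤ ∧ p (Fin.last k) = ⊥ ∧
        (∀ i : Fin k, p i.succ ⋖ p i.castSucc) ∧
        (∀ x ∈ X, ∃ i : Fin k, x ≤ p i.castSucc ∧ ¬ x ≤ p i.succ) ∧
        (∀ x ∈ X, ∀ y ∈ X, ∀ i : Fin k,
          x ≤ p i.castSucc ∧ ¬ x ≤ p i.succ → y ≤ p i.castSucc ∧ ¬ y ≤ p i.succ →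
          x = y) :=
  cIndepSet_iff_partial_cross_section_general X
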